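/- For every real number x and every real t with |t| < π/2, the series Σ_{n≥0} D̄^{(1,0,∅,0)}_{2n+1}(x) · t^{2n+1}/(2n+1)! converges and its sum equals x·(sec t)^x·∫_0^t (cos z)^x dz, where sec t = 1/cos t. -/

import Mathlib

/-- A permutation `σ` of `{1,…,n}` (as a permutation of `Fin n`) is up-down if
`σ_1 < σ_2 > σ_3 < σ_4 > ⋯`. -/
def UpDown {n : ℕ} (σ : Equiv.Perm (Fin n)) : Prop :=
  ∀ i : Fin n, ∀ h : i.val + 1 < n,
    if Even i.val then σ i < σ ⟨i.val + 1, h⟩ else σ ⟨i.val + 1, h⟩ < σ i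

/-- A permutation is down-up if `σ_1 > σ_2 < σ_3 > σ_4 < ⋯`. -/
def DownUp {n : ℕ} (σ : Equiv.Perm (Fin n)) : Prop :=
  ∀ i : Fin n, ∀ h : i.val + 1 < n,
    if Even i.val then σ ⟨i.val + 1, h⟩ < σ i else σ i < σ ⟨i.val + 1, h⟩

/-- `σ_i` matches `MMP(1,0,∅,0)`: there exists `j > i` with `σ_j > σ_i` and
there is no `j < i` with `σ_j < σ_i`. -/
def Matches1 {n : ℕ} (σ : Equiv.Perm (Fin n)) (i : Fin n) : Prop :=
  (∃ j, i < j ∧ σ i < σ j) ∧ ¬ ∃ j, j < i ∧ σ j < σ i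

/-- `mmp^{(1,0,∅,0)}(σ)`: the number of indices matching `MMP(1,0,∅,0)` in `σ`. -/
noncomputable def mmp1 {n : ℕ} (σ : Equiv.Perm (Fin n)) : ℕ :=
  {i : Fin n | Matches1 σ i}.ncard

open scoped Classical in
/-- `D̄^{(1,0,∅,0)}_{2n+1}(x) = Σ_{σ ∈ DU_{2n+1}} x^{mmp^{(1,0,∅,0)}(σ) + χ(σ_1 = 2n+1)}`,
where `χ(σ_1 = 2n+1)` is 1 if the first entry of `σ` is the largest value `2n+1`
(i.e. `2*n` as an element of `Fin (2n+1)`) and 0 otherwise. -/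
noncomputable def Dbar (n : ℕ) (x : ℝ) : ℝ :=
  ∑ σ : Equiv.Perm (Fin (2*n+1)), if DownUp σ
    then x ^ (mmp1 σ + if (σ ⟨0, by omega⟩).val = 2*n then 1 else 0) else 0

/-!
For a down-up permutation of odd length, `mmp + χ` is the number of left-to-right minima: these are
the entries with nothing smaller to their left, and each of them has a larger entry to its right,
unless the largest entry comes first, which is what `χ` accounts for.

The left-to-right minima are counted by André's method. Consider permutations that are down-up on an
initial segment and increasing afterwards; whether there is a descent or an ascent where the two
parts meet decides which of two consecutive such classes the permutation belongs to. The resulting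
alternating sum is the recurrence for the Taylor coefficients given by the differential equation
`cos * F' = x * cos + x * sin * F`. The odd function `(sec t) ^ x * x * ∫_0^t (cos z) ^ x dz`
satisfies that equation and is holomorphic on the disc of radius `π / 2`, so that its Taylor series
converges to it there.
-/

section LeftRightMinima

open Equiv Finset

/-- The set of positions of the left-to-right minima of `σ`. -/
def leftRightMinima {n : ℕ} (σ : Perm (Fin n)) : Finset (Fin n) :=
  {i | ∀ j < i, σ i < σ j}

lemma mem_leftRightMinima {n : ℕ} {σ : Perm (Fin n)} {i : Fin n} :
    i ∈ leftRightMinima σ ↔ ∀ j < i, σ i < σ j := by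
  simp [leftRightMinima]

lemma mem_leftRightMinima_iff_not_exists {n : ℕ} {σ : Perm (Fin n)} {i : Fin n} :
    i ∈ leftRightMinima σ ↔ ¬ ∃ j, j < i ∧ σ j < σ i := by
  simp only [mem_leftRightMinima, not_exists, not_and, not_lt]
  exact forall₂_congr fun j hj => ((σ.injective.ne hj.ne').le_iff_lt).symm

lemma zero_mem_leftRightMinima {n : ℕ} (σ : Perm (Fin (n + 1))) : 0 ∈ leftRightMinima σ :=
  mem_leftRightMinima.mpr fun _ hj => absurd hj (Fin.not_lt_zero _)

lemma exists_zero_lt_and_apply_lt_iff {n : ℕ} (σ : Perm (Fin (n + 1))) :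
    (∃ j, 0 < j ∧ σ 0 < σ j) ↔ σ 0 ≠ Fin.last n := by
  constructor
  · rintro ⟨j, -, hj⟩
    exact Fin.ne_last_of_lt hj
  · intro h
    have hlt : σ 0 < σ (σ.symm (Fin.last n)) := by simpa using Fin.lt_last_iff_ne_last.mpr h
    exact ⟨_, Fin.pos_iff_ne_zero.mpr fun h0 => hlt.ne (by rw [h0]), hlt⟩

/-- Such an entry is a valley, and it is not the last entry, which is a peak; so its right neighbour
is larger. -/
lemma DownUp.exists_lt_apply_lt {n : ℕ} {σ : Perm (Fin (2 * n + 1))} (hσ : DownUp σ)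
    {i : Fin (2 * n + 1)} (hi : i ∈ leftRightMinima σ) (h0 : i ≠ 0) :
    ∃ j, i < j ∧ σ i < σ j := by
  obtain ⟨i, hin⟩ := i
  obtain ⟨i, rfl⟩ : ∃ k, i = k + 1 := Nat.exists_eq_succ_of_ne_zero fun h => h0 (Fin.ext h)
  have descent : σ ⟨i + 1, hin⟩ < σ ⟨i, by omega⟩ :=
    mem_leftRightMinima.mp hi _ (Fin.mk_lt_mk.mpr i.lt_succ_self)
  have even_i : Even i := by
    by_contra hodd
    have ascent := hσ ⟨i, by omega⟩ hin
    rw [if_neg hodd] at ascent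
    exact ascent.asymm descent
  have hlt : i + 1 + 1 < 2 * n + 1 := by
    obtain ⟨k, rfl⟩ := even_i
    omega
  have ascent := hσ ⟨i + 1, hin⟩ hlt
  rw [if_neg (by simpa [Nat.even_add_one] using even_i)] at ascent
  exact ⟨⟨i + 1 + 1, hlt⟩, Fin.mk_lt_mk.mpr (Nat.lt_succ_self _), ascent⟩

lemma DownUp.matches1_iff {n : ℕ} {σ : Perm (Fin (2 * n + 1))} (hσ : DownUp σ)
    (i : Fin (2 * n + 1)) :
    Matches1 σ i ↔ i ∈ leftRightMinima σ ∧ ¬ (i = 0 ∧ σ 0 = Fin.last (2 * n)) := by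
  rw [Matches1, ← mem_leftRightMinima_iff_not_exists, and_comm]
  refine and_congr_right fun hi => ?_
  by_cases h0 : i = 0
  · simp [h0, exists_zero_lt_and_apply_lt_iff]
  · simpa [h0] using hσ.exists_lt_apply_lt hi h0

lemma DownUp.mmp1_add_eq_card_leftRightMinima {n : ℕ} {σ : Perm (Fin (2 * n + 1))}
    (hσ : DownUp σ) :
    mmp1 σ + (if σ 0 = Fin.last (2 * n) then 1 else 0) = #(leftRightMinima σ) := by
  unfold mmp1
  split_ifs with htop
  · have : {i | Matches1 σ i} = ((leftRightMinima σ).erase 0 : Finset _) := by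
      ext i
      simp [hσ.matches1_iff, htop, and_comm]
    rw [this, Set.ncard_coe_finset, card_erase_add_one (zero_mem_leftRightMinima σ)]
  · have : {i | Matches1 σ i} = (leftRightMinima σ : Set _) := by
      ext i
      simp [hσ.matches1_iff, htop]
    rw [this, Set.ncard_coe_finset, add_zero]

open Classical in
/-- The generating function `∑ x ^ lrmin(σ)` of the down-up permutations of length `2n + 1` by
number of left-to-right minima. For real `x` it is `Dbar n x`; complex `x` occur as well. -/
noncomputable def lrMinSum {R : Type*} [CommRing R] (n : ℕ) (x : R) : R :=
  ∑ σ : Perm (Fin (2 * n + 1)) with DownUp σ, x ^ #(leftRightMinima σ)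

lemma Dbar_eq_lrMinSum (n : ℕ) (x : ℝ) : Dbar n x = lrMinSum n x := by
  classical
  rw [Dbar, lrMinSum, sum_filter]
  refine sum_congr rfl fun σ _ => if_ctx_congr Iff.rfl (fun hσ => ?_) fun _ => rfl
  rw [← hσ.mmp1_add_eq_card_leftRightMinima]
  simp only [Fin.ext_iff, Fin.val_last, Fin.zero_eta]
  congr!

lemma ofReal_lrMinSum (n : ℕ) (x : ℝ) : ((lrMinSum n x : ℝ) : ℂ) = lrMinSum n (x : ℂ) := by
  simp [lrMinSum]

end LeftRightMinima

section AppendingAnEntry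

open Equiv Finset

/-- The permutation `σ` of length `m + 1` whose last entry is `k` and whose other entries are in the
same relative order as those of `τ`. -/
def snocPerm {m : ℕ} (k : Fin (m + 1)) (τ : Perm (Fin m)) : Perm (Fin (m + 1)) :=
  finSuccEquivLast.trans (τ.optionCongr.trans (finSuccEquiv' k).symm)

variable {m : ℕ}

@[simp] lemma snocPerm_last (k : Fin (m + 1)) (τ : Perm (Fin m)) :
    snocPerm k τ (Fin.last m) = k := by
  simp [snocPerm]

@[simp] lemma snocPerm_castSucc (k : Fin (m + 1)) (τ : Perm (Fin m)) (i : Fin m) :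
    snocPerm k τ i.castSucc = k.succAbove (τ i) := by
  simp [snocPerm]

lemma snocPerm_bijective (m : ℕ) :
    Function.Bijective fun p : Fin (m + 1) × Perm (Fin m) => snocPerm p.1 p.2 := by
  rw [Fintype.bijective_iff_injective_and_card]
  constructor
  · rintro ⟨k, τ⟩ ⟨l, ρ⟩ h
    obtain rfl : k = l := by simpa using DFunLike.congr_fun h (Fin.last m)
    obtain rfl : τ = ρ :=
      Equiv.ext fun i => by simpa using DFunLike.congr_fun h i.castSucc
    rfl
  · simp [Fintype.card_perm, Nat.factorial_succ]

lemma castSucc_mem_leftRightMinima_snocPerm {k : Fin (m + 1)} {τ : Perm (Fin m)} {i : Fin m} :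
    i.castSucc ∈ leftRightMinima (snocPerm k τ) ↔ i ∈ leftRightMinima τ := by
  simp [mem_leftRightMinima, Fin.forall_fin_succ', Fin.not_lt.mpr (Fin.le_last _)]

lemma last_mem_leftRightMinima_snocPerm {k : Fin (m + 1)} {τ : Perm (Fin m)} :
    Fin.last m ∈ leftRightMinima (snocPerm k τ) ↔ k = 0 := by
  simp only [mem_leftRightMinima, Fin.forall_fin_succ', Fin.castSucc_lt_last, forall_const,
    snocPerm_last, snocPerm_castSucc, lt_self_iff_false, IsEmpty.forall_iff, and_true]
  constructor
  · intro h
    by_contra hk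
    obtain ⟨j, hj⟩ := Fin.exists_succAbove_eq (Ne.symm hk)
    simpa [hj] using h (τ.symm j)
  · rintro rfl i
    simp

lemma card_leftRightMinima_snocPerm (k : Fin (m + 1)) (τ : Perm (Fin m)) :
    #(leftRightMinima (snocPerm k τ)) = #(leftRightMinima τ) + if k = 0 then 1 else 0 := by
  have h := Fin.sum_univ_castSucc fun i : Fin (m + 1) =>
    if i ∈ leftRightMinima (snocPerm k τ) then 1 else 0
  simpa [castSucc_mem_leftRightMinima_snocPerm, last_mem_leftRightMinima_snocPerm] using h

lemma downUp_iff_forall_succ {σ : Perm (Fin (m + 1))} :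
    DownUp σ ↔ ∀ i : Fin m,
      if Even i.val then σ i.succ < σ i.castSucc else σ i.castSucc < σ i.succ :=
  ⟨fun h i => h i.castSucc (Nat.succ_lt_succ i.isLt),
    fun h i hi => h ⟨i.val, Nat.lt_of_succ_lt_succ hi⟩⟩

lemma downUp_snocPerm {k : Fin (m + 2)} {τ : Perm (Fin (m + 1))} :
    DownUp (snocPerm k τ) ↔ DownUp τ ∧
      if Even m then k ≤ (τ (Fin.last m)).castSucc else (τ (Fin.last m)).castSucc < k := by
  simp only [downUp_iff_forall_succ, Fin.forall_fin_succ', Fin.succ_castSucc, Fin.succ_last,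
    snocPerm_castSucc, snocPerm_last, Fin.succAbove_lt_succAbove_iff, Fin.val_castSucc,
    Fin.val_last, Fin.lt_succAbove_iff_le_castSucc, Fin.succAbove_lt_iff_castSucc_lt]

end AppendingAnEntry

section AndreRecurrence

open Equiv Finset

variable {R : Type*} [CommRing R]

open Classical in
/-- The sum over the down-up permutations `σ` of length `m + 1` of `x ^ lrmin(σ)` times the value
of `g` at the last entry of `σ` (entries are numbered from `0`). -/
noncomputable def downUpSum (x : R) (m : ℕ) (g : ℕ → R) : R :=
  ∑ σ : Perm (Fin (m + 1)) with DownUp σ, x ^ #(leftRightMinima σ) * g (σ (Fin.last m))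

lemma downUpSum_congr (x : R) {m : ℕ} {g h : ℕ → R} (H : ∀ j ≤ m, g j = h j) :
    downUpSum x m g = downUpSum x m h :=
  sum_congr rfl fun σ _ => by rw [H _ (Fin.is_le _)]

lemma downUpSum_add (x : R) (m : ℕ) (g h : ℕ → R) :
    downUpSum x m (fun j => g j + h j) = downUpSum x m g + downUpSum x m h := by
  simp only [downUpSum, mul_add, sum_add_distrib]

lemma downUpSum_const (x : R) (n : ℕ) (a : R) :
    downUpSum x (2 * n) (fun _ => a) = lrMinSum n x * a := by
  rw [downUpSum, lrMinSum, sum_mul]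

lemma downUpSum_zero (x : R) (g : ℕ → R) : downUpSum x 0 g = x * g 0 := by
  classical
  have downUp (σ : Perm (Fin 1)) : DownUp σ := downUp_iff_forall_succ.mpr fun i => i.elim0
  rw [downUpSum, sum_filter_of_ne fun σ _ _ => downUp σ, Fintype.sum_unique]
  simp [leftRightMinima]

lemma downUpSum_succ (x : R) (m : ℕ) (g : ℕ → R) :
    downUpSum x (m + 1) g = downUpSum x m fun j =>
      ∑ k ∈ range (m + 2) with if Even m then k ≤ j else j < k,
        x ^ (if k = 0 then 1 else 0) * g k := by
  classical
  simp only [downUpSum, sum_filter]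
  rw [← (Equiv.ofBijective _ (snocPerm_bijective (m + 1))).sum_comp, Fintype.sum_prod_type_right]
  refine sum_congr rfl fun τ _ => ?_
  simp only [Equiv.ofBijective_apply, snocPerm_last, card_leftRightMinima_snocPerm,
    downUp_snocPerm, ite_and, Finset.sum_ite_irrel, sum_const_zero, sum_range, mul_sum, mul_ite,
    mul_zero, pow_add, mul_assoc, Fin.le_def, Fin.lt_def, Fin.val_castSucc, Fin.ext_iff,
    Fin.val_zero]

lemma downUpSum_two_mul_add_one (x : R) (p : ℕ) (g : ℕ → R) :
    downUpSum x (2 * p + 1) g =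
      downUpSum x (2 * p) fun j => ∑ k ∈ Ico 0 (j + 1), g k + (x - 1) * g 0 := by
  rw [downUpSum_succ]
  refine downUpSum_congr x fun j hj => ?_
  have range_eq : {k ∈ range (2 * p + 2) | if Even (2 * p) then k ≤ j else j < k} =
      range (j + 1) := by
    ext k
    simp only [even_two_mul, if_true, mem_filter, mem_range]
    omega
  rw [range_eq, ← range_eq_Ico, sum_range_succ', sum_range_succ']
  simp only [Nat.add_eq_zero_iff, one_ne_zero, and_false, if_false, if_true, pow_zero, one_mul,
    pow_one]
  ring

lemma downUpSum_two_mul_add_two (x : R) (p : ℕ) (g : ℕ → R) :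
    downUpSum x (2 * p + 2) g =
      downUpSum x (2 * p + 1) fun j => ∑ k ∈ Ico (j + 1) (2 * p + 3), g k := by
  rw [downUpSum_succ]
  refine downUpSum_congr x fun j _ => sum_congr ?_ fun k hk => ?_
  · ext k
    simp only [Nat.not_even_bit1, if_false, mem_filter, mem_range, mem_Ico]
    omega
  · have : k ≠ 0 := by rintro rfl; simp at hk
    simp [this]

lemma sum_Ico_choose_sub (r : ℕ) {a b c : ℕ} (hab : a ≤ b) (hbc : b ≤ c + 1) :
    ∑ k ∈ Ico a b, ((c - k).choose r : R) =
      (c + 1 - a).choose (r + 1) - (c + 1 - b).choose (r + 1) := by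
  induction b, hab using Nat.le_induction with
  | base => simp
  | succ b hab ih =>
    have pascal : (c + 1 - b).choose (r + 1) =
        (c - b).choose r + (c - b).choose (r + 1) := by
      rw [Nat.succ_sub (by omega), Nat.choose_succ_succ]
    rw [sum_Ico_succ_top hab, ih (by omega), pascal, Nat.add_sub_add_right]
    push_cast
    ring

/-- The sum of `x ^ lrmin(σ)` over the permutations `σ` of length `2 * (p + i) + 1` which are
down-up on their first `2 * p + 1` entries and increasing from there on: if the down-up part ends
in `k` (after standardization), the binomial coefficient counts its increasing continuations. -/
noncomputable def downUpThenIncreasingSum (x : R) (p i : ℕ) : R :=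
  downUpSum x (2 * p) fun k => ((2 * (p + i) - k).choose (2 * i) : R)

lemma downUpThenIncreasingSum_zero_left (x : R) (i : ℕ) : downUpThenIncreasingSum x 0 i = x := by
  simp [downUpThenIncreasingSum, downUpSum_zero]

lemma downUpThenIncreasingSum_zero_right (x : R) (p : ℕ) :
    downUpThenIncreasingSum x p 0 = lrMinSum p x := by
  simp [downUpThenIncreasingSum, downUpSum_const]

/-- Both sides count the permutations that are down-up on their first `2 * p + 1` entries and
increasing on the remaining `2 * i + 2`: on the left according to whether there is a descent or an
ascent between the two parts, on the right by choosing the entries of the increasing part, where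
its first entry is a left-to-right minimum exactly when the smallest entry is chosen. -/
lemma downUpThenIncreasingSum_add (x : R) (p i : ℕ) :
    downUpThenIncreasingSum x (p + 1) i + downUpThenIncreasingSum x p (i + 1) =
      lrMinSum p x *
        ((2 * (p + 1 + i)).choose (2 * i + 2) + x * (2 * (p + 1 + i)).choose (2 * i + 1)) := by
  have remove_last : downUpThenIncreasingSum x (p + 1) i =
      downUpSum x (2 * p + 1) fun j => ((2 * (p + 1 + i) - j).choose (2 * i + 1) : R) := by
    rw [downUpThenIncreasingSum, mul_add_one, downUpSum_two_mul_add_two]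
    refine downUpSum_congr x fun j hj => ?_
    rw [sum_Ico_choose_sub _ (by omega) (by omega),
      Nat.choose_eq_zero_of_lt (by omega : _ - (2 * p + 3) < _), Nat.add_sub_add_right]
    simp [add_comm]
  rw [remove_last, downUpSum_two_mul_add_one, downUpThenIncreasingSum, ← downUpSum_add,
    ← downUpSum_const]
  refine downUpSum_congr x fun j hj => ?_
  rw [sum_Ico_choose_sub _ (by omega) (by omega), Nat.add_sub_add_right,
    show p + (i + 1) = p + 1 + i by omega, mul_add_one 2 i, Nat.sub_zero, Nat.sub_zero,
    Nat.choose_succ_succ', show 2 * i + 1 + 1 = 2 * i + 2 from rfl]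
  push_cast
  ring

/-- The recurrence obtained by comparing the coefficients of `X ^ (2 * p) / (2 * p)!` in
`cos * A' = x * cos + x * sin * A`, where `A = ∑ a n * X ^ (2 * n + 1) / (2 * n + 1)!`. -/
def AndreRecurrence (x : R) (a : ℕ → R) : Prop :=
  ∀ p, ∑ q ∈ range (p + 1), (-1) ^ q * (2 * p).choose (2 * q) * a (p - q) =
    x * (-1) ^ p +
      x * ∑ q ∈ range p, (-1) ^ q * (2 * p).choose (2 * q + 1) * a (p - 1 - q)

lemma AndreRecurrence.unique {x : R} {a b : ℕ → R} (ha : AndreRecurrence x a)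
    (hb : AndreRecurrence x b) (n : ℕ) : a n = b n := by
  induction n using Nat.strong_induction_on with
  | _ n ih =>
    have right_eq : ∑ q ∈ range n, (-1) ^ q * (2 * n).choose (2 * q + 1) * a (n - 1 - q) =
        ∑ q ∈ range n, (-1) ^ q * (2 * n).choose (2 * q + 1) * b (n - 1 - q) :=
      sum_congr rfl fun q hq => by rw [ih _ (by have := mem_range.mp hq; omega)]
    have tail_eq :
        ∑ q ∈ range n, (-1) ^ (q + 1) * (2 * n).choose (2 * (q + 1)) * a (n - (q + 1)) =
          ∑ q ∈ range n, (-1) ^ (q + 1) * (2 * n).choose (2 * (q + 1)) * b (n - (q + 1)) :=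
      sum_congr rfl fun q hq => by rw [ih _ (by have := mem_range.mp hq; omega)]
    have left_eq := (ha n).trans (right_eq ▸ (hb n).symm)
    rw [sum_range_succ', sum_range_succ', tail_eq] at left_eq
    simpa using left_eq

theorem andreRecurrence_lrMinSum (x : R) : AndreRecurrence x fun n => lrMinSum n x := by
  intro p
  let f (q : ℕ) : R := (-1) ^ q * downUpThenIncreasingSum x (p - q) q
  have telescope := sum_range_sub' f p
  have difference (q : ℕ) (hq : q ∈ range p) : f q - f (q + 1) =
      (-1) ^ q * (2 * p).choose (2 * q + 2) * lrMinSum (p - 1 - q) x +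
        x * ((-1) ^ q * (2 * p).choose (2 * q + 1) * lrMinSum (p - 1 - q) x) := by
    obtain ⟨r, rfl⟩ : ∃ r, p = r + 1 + q := ⟨p - 1 - q, by have := mem_range.mp hq; omega⟩
    have descent_or_ascent := downUpThenIncreasingSum_add x r q
    simp only [f, show r + 1 + q - q = r + 1 by omega, show r + 1 + q - (q + 1) = r by omega,
      show r + 1 + q - 1 - q = r by omega]
    linear_combination (-1) ^ q * descent_or_ascent
  rw [sum_congr rfl difference, sum_add_distrib, ← mul_sum] at telescope
  simp only [f, tsub_self, downUpThenIncreasingSum_zero_left, tsub_zero,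
    downUpThenIncreasingSum_zero_right, pow_zero, one_mul] at telescope
  rw [sum_range_succ']
  have shift : ∑ q ∈ range p, (-1) ^ (q + 1) * (2 * p).choose (2 * (q + 1)) *
      lrMinSum (p - (q + 1)) x =
      -∑ q ∈ range p, (-1) ^ q * (2 * p).choose (2 * q + 2) * lrMinSum (p - 1 - q) x := by
    rw [← sum_neg_distrib]
    refine sum_congr rfl fun q _ => ?_
    rw [Nat.sub_sub, add_comm 1 q, mul_add_one 2 q]
    ring
  rw [shift]
  simp only [pow_zero, mul_zero, Nat.choose_zero_right, Nat.cast_one, mul_one, tsub_zero, one_mul]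
  linear_combination -telescope

end AndreRecurrence

section TaylorCoefficients

open Finset Metric
open scoped Nat

lemma sum_range_two_mul {M : Type*} [AddCommMonoid M] (f : ℕ → M) (n : ℕ) :
    ∑ i ∈ range (2 * n), f i = ∑ k ∈ range n, f (2 * k) + ∑ k ∈ range n, f (2 * k + 1) := by
  induction n with
  | zero => simp
  | succ n ih =>
    rw [mul_add_one, sum_range_succ, sum_range_succ, ih, sum_range_succ, sum_range_succ]
    abel

lemma iteratedDeriv_two_mul_cos_mul {g : ℂ → ℂ} {n : ℕ} (hg : ContDiffAt ℂ (2 * n : ℕ) g 0) :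
    iteratedDeriv (2 * n) (Complex.cos * g) 0 =
      ∑ k ∈ range (n + 1),
        (-1) ^ k * (2 * n).choose (2 * k) * iteratedDeriv (2 * (n - k)) g 0 := by
  rw [iteratedDeriv_mul Complex.contDiff_cos.contDiffAt hg, sum_range_succ,
    sum_range_two_mul, sum_range_succ]
  simp [Complex.iteratedDeriv_even_cos, Nat.mul_sub, mul_comm ((-1 : ℂ) ^ _)]

lemma iteratedDeriv_two_mul_sin_mul {g : ℂ → ℂ} {n : ℕ} (hg : ContDiffAt ℂ (2 * n : ℕ) g 0) :
    iteratedDeriv (2 * n) (Complex.sin * g) 0 =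
      ∑ k ∈ range n,
        (-1) ^ k * (2 * n).choose (2 * k + 1) * iteratedDeriv (2 * (n - 1 - k) + 1) g 0 := by
  rw [iteratedDeriv_mul Complex.contDiff_sin.contDiffAt hg, sum_range_succ,
    sum_range_two_mul]
  simp only [Complex.iteratedDeriv_even_sin, Complex.iteratedDeriv_odd_sin, Pi.mul_apply,
    Pi.pow_apply, Pi.neg_apply, Pi.one_apply, Complex.sin_zero, Complex.cos_zero, mul_zero,
    zero_mul, sum_const_zero, zero_add, add_zero, mul_one]
  refine sum_congr rfl fun k hk => ?_
  rw [show 2 * n - (2 * k + 1) = 2 * (n - 1 - k) + 1 by have := mem_range.mp hk; omega]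
  ring

lemma andreRecurrence_iteratedDeriv {a : ℂ} {f : ℂ → ℂ} (hf : AnalyticAt ℂ f 0)
    (hode : ∀ᶠ z in nhds 0, Complex.cos z * deriv f z =
      a * Complex.cos z + a * (Complex.sin z * f z)) :
    AndreRecurrence a fun n => iteratedDeriv (2 * n + 1) f 0 := by
  intro n
  have hsin : AnalyticAt ℂ (Complex.sin * f) 0 := Complex.analyticAt_sin.mul hf
  have hderiv : iteratedDeriv (2 * n) (Complex.cos * deriv f) 0 =
      iteratedDeriv (2 * n) ((a * Complex.cos ·) + (a * (Complex.sin * f) ·)) 0 :=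
    Filter.EventuallyEq.iteratedDeriv_eq _ hode
  rw [iteratedDeriv_add (contDiffAt_const.mul Complex.contDiff_cos.contDiffAt)
      (contDiffAt_const.mul hsin.contDiffAt),
    iteratedDeriv_const_mul_field, iteratedDeriv_const_mul_field,
    iteratedDeriv_two_mul_cos_mul hf.deriv.contDiffAt,
    iteratedDeriv_two_mul_sin_mul hf.contDiffAt] at hderiv
  simpa [iteratedDeriv_succ', Complex.iteratedDeriv_even_cos] using hderiv

lemma iteratedDeriv_two_mul_eq_zero_of_odd {𝕜 F : Type*} [NontriviallyNormedField 𝕜]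
    [NormedAddCommGroup F] [NormedSpace 𝕜 F] [IsAddTorsionFree F] {f : 𝕜 → F} (hf : f.Odd)
    (n : ℕ) :
    iteratedDeriv (2 * n) f 0 = 0 := by
  have h := iteratedDeriv_comp_neg (2 * n) f 0
  rw [funext hf, iteratedDeriv_fun_neg] at h
  simpa [neg_eq_self] using h

lemma hasSum_taylorSeries_of_odd {f : ℂ → ℂ} {r : ℝ} (hf : DifferentiableOn ℂ f (ball 0 r))
    (hodd : f.Odd) {z : ℂ} (hz : ‖z‖ < r) :
    HasSum (fun n : ℕ => iteratedDeriv (2 * n + 1) f 0 * z ^ (2 * n + 1) / (2 * n + 1)!)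
      (f z) := by
  have taylor := Complex.hasSum_taylorSeries_on_ball hf (mem_ball_zero_iff.mpr hz)
  have inj : Function.Injective fun n : ℕ => 2 * n + 1 := fun a b h => by simpa using h
  rw [← inj.hasSum_iff fun m hm => ?_] at taylor
  · refine taylor.congr_fun fun n => ?_
    simp only [Function.comp_apply, sub_zero, smul_eq_mul]
    ring
  · obtain ⟨k, rfl⟩ : Even m := by
      rw [← Nat.not_odd_iff_even]
      rintro ⟨k, rfl⟩
      exact hm ⟨k, rfl⟩
    simp [← two_mul, iteratedDeriv_two_mul_eq_zero_of_odd hodd]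

end TaylorCoefficients

section SecPowIntegral

open Metric
open scoped Nat

lemma cos_mem_slitPlane {z : ℂ} (hz : |z.re| < Real.pi / 2) :
    Complex.cos z ∈ Complex.slitPlane := by
  refine Or.inl ?_
  have re_cos : (Complex.cos z).re = Real.cos z.re * Real.cosh z.im := by
    simp [Complex.cos_eq z, ← Complex.ofReal_cos, ← Complex.ofReal_cosh, ← Complex.ofReal_sin,
      ← Complex.ofReal_sinh]
  rw [re_cos]
  exact mul_pos (Real.cos_pos_of_mem_Ioo (abs_lt.mp hz)) (Real.cosh_pos _)

lemma cos_mem_slitPlane_of_mem_ball {z : ℂ} (hz : z ∈ ball 0 (Real.pi / 2)) :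
    Complex.cos z ∈ Complex.slitPlane :=
  cos_mem_slitPlane ((Complex.abs_re_le_norm z).trans_lt (mem_ball_zero_iff.mp hz))

lemma hasDerivAt_mul_integral_unitInterval {h : ℂ → ℂ} {r : ℝ}
    (hh : DifferentiableOn ℂ h (ball 0 r)) {z : ℂ} (hz : z ∈ ball 0 r) :
    HasDerivAt (fun w => w * ∫ s in (0 : ℝ)..1, h (s * w)) (h z) z := by
  obtain ⟨G, hG0, hG⟩ := hh.isExactOn_ball.with_val_at 0 0
  refine (hG z hz).congr_of_eventuallyEq ?_
  filter_upwards [isOpen_ball.mem_nhds hz] with w hw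
  have segment_mem (s : ℝ) (hs : s ∈ Set.Icc (0 : ℝ) 1) : 0 + s • w ∈ ball (0 : ℂ) r :=
    (convex_ball (0 : ℂ) r).add_smul_mem (mem_ball_self (pos_of_mem_ball hw)) (by simpa using hw) hs
  have ftc := intervalIntegral.integral_unitInterval_deriv_eq_sub (f := G) (f' := h)
    (hh.continuousOn.comp (by fun_prop) segment_mem) fun s hs => hG _ (segment_mem s hs)
  simpa [hG0] using ftc

/-- The function `a * (sec z) ^ a * ∫_0^z (cos u) ^ a du`, the integral being taken along the
segment from `0` to `z`. -/
noncomputable def secPowIntegral (a z : ℂ) : ℂ :=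
  a * Complex.cos z ^ (-a) * (z * ∫ s in (0 : ℝ)..1, Complex.cos (s * z) ^ a)

lemma secPowIntegral_odd (a : ℂ) : (secPowIntegral a).Odd := fun z => by
  simp [secPowIntegral]

lemma hasDerivAt_secPowIntegral (a : ℂ) {z : ℂ} (hz : z ∈ ball 0 (Real.pi / 2)) :
    HasDerivAt (secPowIntegral a)
      (a + a * (Complex.sin z / Complex.cos z * secPowIntegral a z)) z := by
  have hcos := cos_mem_slitPlane_of_mem_ball hz
  have hcos0 : Complex.cos z ≠ 0 := Complex.slitPlane_ne_zero hcos
  have cos_pow : DifferentiableOn ℂ (fun w => Complex.cos w ^ a) (ball 0 (Real.pi / 2)) :=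
    fun w hw => ((Complex.hasDerivAt_cos w).cpow_const
      (cos_mem_slitPlane_of_mem_ball hw)).differentiableAt.differentiableWithinAt
  have sec_pow : HasDerivAt (fun w => Complex.cos w ^ (-a))
      (a * (Complex.sin z / Complex.cos z * Complex.cos z ^ (-a))) z := by
    convert! (Complex.hasDerivAt_cos z).cpow_const (c := -a) hcos using 1
    rw [Complex.cpow_sub _ _ hcos0, Complex.cpow_one]
    ring
  have cancel : Complex.cos z ^ (-a) * Complex.cos z ^ a = 1 := by
    rw [← Complex.cpow_add _ _ hcos0, neg_add_cancel, Complex.cpow_zero]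
  convert! (sec_pow.const_mul a).mul (hasDerivAt_mul_integral_unitInterval cos_pow hz) using 1
  rw [secPowIntegral]
  linear_combination -a * cancel

lemma differentiableOn_secPowIntegral (a : ℂ) :
    DifferentiableOn ℂ (secPowIntegral a) (ball 0 (Real.pi / 2)) := fun _ hz =>
  (hasDerivAt_secPowIntegral a hz).differentiableAt.differentiableWithinAt

theorem iteratedDeriv_secPowIntegral (a : ℂ) (n : ℕ) :
    iteratedDeriv (2 * n + 1) (secPowIntegral a) 0 = lrMinSum n a := by
  have hball : ball (0 : ℂ) (Real.pi / 2) ∈ nhds 0 := ball_mem_nhds _ (by positivity)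
  have analytic : AnalyticAt ℂ (secPowIntegral a) 0 :=
    (differentiableOn_secPowIntegral a).analyticAt hball
  refine (andreRecurrence_iteratedDeriv analytic ?_).unique (andreRecurrence_lrMinSum a) n
  filter_upwards [hball] with z hz
  have hcos0 := Complex.slitPlane_ne_zero (cos_mem_slitPlane_of_mem_ball hz)
  rw [(hasDerivAt_secPowIntegral a hz).deriv]
  field_simp

lemma ofReal_secPowIntegral (x : ℝ) {t : ℝ} (ht : |t| < Real.pi / 2) :
    ((x * (Real.cos t)⁻¹ ^ x * ∫ z in (0 : ℝ)..t, Real.cos z ^ x : ℝ) : ℂ) =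
      secPowIntegral x t := by
  have cos_pos {u : ℝ} (hu : |u| ≤ |t|) : 0 < Real.cos u :=
    Real.cos_pos_of_mem_Ioo (abs_lt.mp (hu.trans_lt ht))
  have integral_eq : t * ∫ s in (0 : ℝ)..1, Real.cos (s * t) ^ x =
      ∫ z in (0 : ℝ)..t, Real.cos z ^ x := by
    simpa using intervalIntegral.mul_integral_comp_mul_right (a := 0) (b := 1)
      (f := fun z => Real.cos z ^ x) t
  have integral_cast : ∫ s in (0 : ℝ)..1, Complex.cos (s * t) ^ (x : ℂ) =
      (∫ s in (0 : ℝ)..1, Real.cos (s * t) ^ x : ℝ) := by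
    rw [← intervalIntegral.integral_ofReal]
    refine intervalIntegral.integral_congr fun s hs => ?_
    rw [Set.uIcc_of_le zero_le_one] at hs
    have hst : |s * t| ≤ |t| := by
      rw [abs_mul, abs_of_nonneg hs.1]
      exact mul_le_of_le_one_left (abs_nonneg t) hs.2
    simp [Complex.ofReal_cpow (cos_pos hst).le]
  rw [secPowIntegral, integral_cast, ← integral_eq,
    Real.inv_rpow (cos_pos le_rfl).le, ← Real.rpow_neg (cos_pos le_rfl).le]
  simp [Complex.ofReal_cpow (cos_pos le_rfl).le]

theorem stmt5_general (x t : ℂ) (ht : ‖t‖ < Real.pi / 2) :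
    HasSum (fun n : ℕ => lrMinSum n x * t ^ (2 * n + 1) / (2 * n + 1)!)
      (x * Complex.cos t ^ (-x) * (t * ∫ s in (0 : ℝ)..1, Complex.cos (s * t) ^ x)) := by
  simpa only [iteratedDeriv_secPowIntegral, secPowIntegral] using
    hasSum_taylorSeries_of_odd (differentiableOn_secPowIntegral x) (secPowIntegral_odd x) ht

end SecPowIntegral

/-- `Σ_{n≥0} D̄^{(1,0,∅,0)}_{2n+1}(x) t^{2n+1}/(2n+1)!` converges to
`x (sec t)^x ∫_0^t (cos z)^x dz`. -/
theorem stmt5 (x t : ℝ) (ht : |t| < Real.pi / 2) :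
    HasSum (fun n : ℕ => Dbar n x * t ^ (2*n+1) / (Nat.factorial (2*n+1) : ℝ))
      (x * ((Real.cos t)⁻¹) ^ x * ∫ z in (0:ℝ)..t, (Real.cos z) ^ x) := by
  rw [← Complex.hasSum_ofReal, ofReal_secPowIntegral x ht]
  simpa [Dbar_eq_lrMinSum, ofReal_lrMinSum, secPowIntegral] using
    stmt5_general x t (by simpa using ht)
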